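/- arXiv:1607.00346 — 2 statements merged into one kernel-verified Lean document; each statement's English description precedes it below -/
import Mathlib

section
/- Let n > 2 be an integer, h = 1/n, let b : (ZMod n)³ → ℝ and α_i : (ZMod n)³ → ℝ for i ∈ {1,2,3} be given with α_i(j) > 0 and b(j) > 0 for all j and i, and let A be the periodic seven-point stencil matrix indexed by (ZMod n)³ with A(j,j) = (1/h²)·Σ_{i=1}^{3}(α_i(j) + α_i(j−e_i)) + b(j), A(j, j+e_i) = A(j+e_i, j) = −(1/h²)·α_i(j), and all other entries zero. Then A is symmetric positive definite. -/
/-!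
For a vector `x` on the grid, summation by parts (translating the grid by `eᵢ` in the terms that
involve `j - eᵢ`) turns the quadratic form of the stencil matrix into the discrete energy
`∑ⱼ b(j) x(j)² + h⁻² ∑ᵢ ∑ⱼ αᵢ(j) (x(j + eᵢ) - x(j))²`.
The second sum is nonnegative, and the first is positive as soon as `x ≠ 0`.

The assumption `n > 2` makes the seven stencil points distinct (`single_add_single_ne_zero` and the
injectivity of `i ↦ eᵢ`), so that each matrix entry is the sum of its stencil contributions
(`stencil_entry`), from which the action on vectors (`stencil_mulVec`) and the energy identity
(`stencil_energy`) follow.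
-/

open Matrix

/-- The forward neighbour `j + eᵢ` and the backward neighbour `j - eₗ` are never the same point:
this is where `n > 2` is needed, since `eᵢ = -eᵢ` when `n = 2`. -/
lemma single_add_single_ne_zero {n : ℕ} (hn : 2 < n) (i l : Fin 3) :
    (Pi.single i 1 + Pi.single l 1 : Fin 3 → ZMod n) ≠ 0 := by
  have : Fact (1 < n) := ⟨by omega⟩
  intro h0
  have h1 := congrFun h0 i
  by_cases hil : i = l
  · subst hil
    have h2 : ((2 : ℕ) : ZMod n) = 0 := by
      push_cast
      simpa [one_add_one_eq_two] using h1
    rw [ZMod.natCast_eq_zero_iff] at h2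
    exact absurd (Nat.le_of_dvd (by norm_num) h2) (by omega)
  · simp [hil] at h1

lemma single_one_inj {n : ℕ} (hn : 2 < n) {i l : Fin 3}
    (hil : (Pi.single i 1 : Fin 3 → ZMod n) = Pi.single l 1) : i = l := by
  have : Fact (1 < n) := ⟨by omega⟩
  by_contra hne
  have h1 := congrFun hil i
  simp [hne] at h1

lemma single_one_ne_zero {n : ℕ} (hn : 2 < n) (i : Fin 3) :
    (Pi.single i 1 : Fin 3 → ZMod n) ≠ 0 := by
  have : Fact (1 < n) := ⟨by omega⟩
  simp

/-- Each entry is the sum of its stencil contributions. At most one of the seven terms is nonzero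
because the stencil points are distinct. -/
lemma stencil_entry {n : ℕ} (hn : 2 < n) {c : ℝ} {d : (Fin 3 → ZMod n) → ℝ}
    {α : Fin 3 → (Fin 3 → ZMod n) → ℝ} {A : Matrix (Fin 3 → ZMod n) (Fin 3 → ZMod n) ℝ}
    (hdiag : ∀ j, A j j = d j)
    (hoff : ∀ j (i : Fin 3), A j (j + Pi.single i 1) = -c * α i j ∧
      A (j + Pi.single i 1) j = -c * α i j)
    (hzero : ∀ j k, k ≠ j →
      (∀ i : Fin 3, k ≠ j + Pi.single i 1 ∧ k ≠ j - Pi.single i 1) → A j k = 0)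
    (j k : Fin 3 → ZMod n) :
    A j k = (if k = j then d j else 0) +
      ∑ i, ((if k = j + Pi.single i 1 then -c * α i j else 0) +
        (if k = j - Pi.single i 1 then -c * α i (j - Pi.single i 1) else 0)) := by
  by_cases hk : k = j
  · subst hk
    have h1 : ∀ l : Fin 3, k ≠ k - Pi.single l 1 := fun l h =>
      single_one_ne_zero hn l (sub_eq_self.mp h.symm)
    simp [hdiag, single_one_ne_zero hn, h1]
  by_cases hp : ∃ i : Fin 3, k = j + Pi.single i 1
  · obtain ⟨i, rfl⟩ := hp
    have h1 : ∀ l : Fin 3, j + Pi.single i 1 = j + Pi.single l 1 ↔ i = l := fun l =>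
      ⟨fun h => single_one_inj hn (add_left_cancel h), fun h => by rw [h]⟩
    have h2 : ∀ l : Fin 3, j + Pi.single i 1 ≠ j - Pi.single l 1 := fun l h =>
      single_add_single_ne_zero hn i l (by
        rw [sub_eq_add_neg] at h
        rw [add_left_cancel h, neg_add_cancel])
    simp only [h1, h2, if_neg hk, (hoff j i).1, if_false, add_zero, zero_add,
      Finset.sum_ite_eq, Finset.mem_univ, if_true]
  by_cases hm : ∃ i : Fin 3, k = j - Pi.single i 1
  · obtain ⟨i, rfl⟩ := hm
    have h1 : ∀ l : Fin 3, j - Pi.single i 1 = j - Pi.single l 1 ↔ i = l := fun l =>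
      ⟨fun h => single_one_inj hn (sub_right_injective h), fun h => by rw [h]⟩
    have h2 : ∀ l : Fin 3, j - Pi.single i 1 ≠ j + Pi.single l 1 := fun l h => hp ⟨l, h⟩
    have h3 := (hoff (j - Pi.single i 1) i).2
    rw [sub_add_cancel] at h3
    simp only [h1, h2, if_neg hk, h3, if_false, zero_add,
      Finset.sum_ite_eq, Finset.mem_univ, if_true]
  · push Not at hp hm
    rw [hzero j k hk fun i => ⟨hp i, hm i⟩]
    simp [hk, hp, hm]

lemma stencil_mulVec {n : ℕ} [NeZero n] (hn : 2 < n) {c : ℝ} {d : (Fin 3 → ZMod n) → ℝ}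
    {α : Fin 3 → (Fin 3 → ZMod n) → ℝ} {A : Matrix (Fin 3 → ZMod n) (Fin 3 → ZMod n) ℝ}
    (hdiag : ∀ j, A j j = d j)
    (hoff : ∀ j (i : Fin 3), A j (j + Pi.single i 1) = -c * α i j ∧
      A (j + Pi.single i 1) j = -c * α i j)
    (hzero : ∀ j k, k ≠ j →
      (∀ i : Fin 3, k ≠ j + Pi.single i 1 ∧ k ≠ j - Pi.single i 1) → A j k = 0)
    (x : (Fin 3 → ZMod n) → ℝ) (j : Fin 3 → ZMod n) :
    (A *ᵥ x) j = d j * x j + ∑ i, (-c * α i j * x (j + Pi.single i 1) +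
      -c * α i (j - Pi.single i 1) * x (j - Pi.single i 1)) := by
  simp only [Matrix.mulVec, dotProduct, stencil_entry hn hdiag hoff hzero j, add_mul,
    Finset.sum_mul, Finset.sum_add_distrib, ite_mul, zero_mul]
  rw [Finset.sum_comm, Finset.sum_comm (s := Finset.univ (α := Fin 3 → ZMod n))]
  simp only [Finset.sum_ite_eq', Finset.mem_univ, if_true]

/-- Summation by parts: the quadratic form of the stencil is the discrete energy. -/
lemma stencil_energy {n : ℕ} [NeZero n] (c : ℝ) (b : (Fin 3 → ZMod n) → ℝ)
    (α : Fin 3 → (Fin 3 → ZMod n) → ℝ) (x : (Fin 3 → ZMod n) → ℝ) :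
    ∑ j, x j * ((c * (∑ i, (α i j + α i (j - Pi.single i 1))) + b j) * x j +
      ∑ i, (-c * α i j * x (j + Pi.single i 1) +
        -c * α i (j - Pi.single i 1) * x (j - Pi.single i 1))) =
    ∑ j, b j * x j ^ 2 + ∑ i, ∑ j, c * α i j * (x (j + Pi.single i 1) - x j) ^ 2 := by
  -- `f i j` is the part of the form living on the edge from `j` to `j + eᵢ`, seen from `j`;
  -- `g i j` is the part of the same edge seen from `j + eᵢ`.
  let f : Fin 3 → (Fin 3 → ZMod n) → ℝ := fun i j =>
    c * α i j * (x j ^ 2 - x j * x (j + Pi.single i 1))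
  let g : Fin 3 → (Fin 3 → ZMod n) → ℝ := fun i j =>
    c * α i j * (x (j + Pi.single i 1) ^ 2 - x (j + Pi.single i 1) * x j)
  have hshift : ∀ i, ∑ j : Fin 3 → ZMod n, g i (j - Pi.single i 1) = ∑ j, g i j := fun i => by
    simpa only [Equiv.subRight_apply] using
      Equiv.sum_comp (Equiv.subRight (Pi.single i 1 : Fin 3 → ZMod n)) (g i)
  calc _ = ∑ j, (b j * x j ^ 2 + ∑ i, (f i j + g i (j - Pi.single i 1))) := by
        refine Finset.sum_congr rfl fun j _ => ?_
        simp only [f, g, sub_add_cancel, Fin.sum_univ_three]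
        ring
    _ = ∑ j, b j * x j ^ 2 +
          ∑ i, (∑ j, f i j + ∑ j : Fin 3 → ZMod n, g i (j - Pi.single i 1)) := by
        rw [Finset.sum_add_distrib, Finset.sum_comm]
        simp only [Finset.sum_add_distrib]
    _ = _ := by
        congr 1
        refine Finset.sum_congr rfl fun i _ => ?_
        rw [hshift, ← Finset.sum_add_distrib]
        refine Finset.sum_congr rfl fun j _ => ?_
        simp only [f, g]
        ring

/-- **Positive definiteness of the periodic seven-point stencil matrix.**  On the periodic
grid `(ZMod n)³` (with `n > 2`, grid spacing `h = 1/n`, unit shifts `e i = Pi.single i 1`),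
if the coefficients satisfy `αᵢ(j) > 0` and `b(j) > 0` for all `i, j`, then the
seven-point stencil matrix `A` of `u ↦ -∇·(a∇u) + b u` is symmetric positive definite. -/
theorem seven_point_stencil_posDef (n : ℕ) [NeZero n] (hn : 2 < n)
    (h : ℝ) (hh : h = 1 / n)
    (b : (Fin 3 → ZMod n) → ℝ) (α : Fin 3 → (Fin 3 → ZMod n) → ℝ)
    (hα : ∀ (i : Fin 3) j, 0 < α i j) (hb : ∀ j, 0 < b j)
    (A : Matrix (Fin 3 → ZMod n) (Fin 3 → ZMod n) ℝ)
    (hdiag : ∀ j, A j j = 1 / h ^ 2 * (∑ i, (α i j + α i (j - Pi.single i 1))) + b j)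
    (hoff : ∀ j (i : Fin 3), A j (j + Pi.single i 1) = -(1 / h ^ 2) * α i j ∧
      A (j + Pi.single i 1) j = -(1 / h ^ 2) * α i j)
    (hzero : ∀ j k, k ≠ j →
      (∀ i : Fin 3, k ≠ j + Pi.single i 1 ∧ k ≠ j - Pi.single i 1) → A j k = 0) :
    A.PosDef := by
  have hc : 0 ≤ 1 / h ^ 2 := by positivity
  refine Matrix.PosDef.of_dotProduct_mulVec_pos ?_ ?_
  · ext j k
    simp only [Matrix.conjTranspose_apply, star_trivial]
    by_cases hk : k = j
    · rw [hk]
    by_cases hp : ∃ i : Fin 3, k = j + Pi.single i 1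
    · obtain ⟨i, rfl⟩ := hp
      rw [(hoff j i).1, (hoff j i).2]
    by_cases hm : ∃ i : Fin 3, j = k + Pi.single i 1
    · obtain ⟨i, rfl⟩ := hm
      rw [(hoff k i).1, (hoff k i).2]
    push Not at hp hm
    rw [hzero j k hk fun i => ⟨hp i, fun e => hm i (by rw [e, sub_add_cancel])⟩,
      hzero k j (Ne.symm hk) fun i => ⟨hm i, fun e => hp i (by rw [e, sub_add_cancel])⟩]
  · intro x hx
    simp only [dotProduct, Pi.star_apply, star_trivial, stencil_mulVec hn hdiag hoff hzero x]
    rw [stencil_energy]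
    obtain ⟨j₀, hj₀⟩ := Function.ne_iff.mp hx
    refine add_pos_of_pos_of_nonneg ?_ ?_
    · exact Finset.sum_pos' (fun j _ => mul_nonneg (hb j).le (sq_nonneg _))
        ⟨j₀, Finset.mem_univ _, mul_pos (hb j₀) (sq_pos_of_ne_zero hj₀)⟩
    · exact Finset.sum_nonneg fun i _ => Finset.sum_nonneg fun j _ =>
        mul_nonneg (mul_nonneg hc (hα i j).le) (sq_nonneg _)
end

section
/- Let n > 2 be an integer, h = 1/n, let b : (ZMod n)³ → ℝ and α_i : (ZMod n)³ → ℝ for i ∈ {1,2,3} be given with α_i(j) > 0 and b(j) ≥ 0 for all j and i, and let A be the periodic seven-point stencil matrix indexed by (ZMod n)³ with A(j,j) = (1/h²)·Σ_{i=1}^{3}(α_i(j) + α_i(j−e_i)) + b(j), A(j, j+e_i) = A(j+e_i, j) = −(1/h²)·α_i(j), and all other entries zero. Then A is symmetric positive semidefinite; moreover, uᵀ A u = 0 for a vector u : (ZMod n)³ → ℝ if and only if u is constant on the grid and b(j)·u(j)² = 0 for all j. -/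
open Matrix

/-!
The matrix is a weighted graph Laplacian plus a nonnegative diagonal. Because `n > 2`, the seven
stencil points are distinct, so each row of `A` acts as the expected seven-term difference
operator (`stencil_row_sum`). Summation by parts on the periodic grid then gives
`uᵀ A u = h⁻² ∑ᵢ ∑ⱼ αᵢ(j) (u(j + eᵢ) - u(j))² + ∑ⱼ b(j) u(j)²` (`stencil_quadratic_form`).
All terms are nonnegative, so the form vanishes exactly when every term does; invariance of `u`
under the unit shifts forces `u` to be constant, since these shifts generate `(ZMod n)³`
(`const_of_shift_invariant`).
-/

/-- The seven stencil offsets: `none` is the centre, `inl i` is `eᵢ` and `inr i` is `-eᵢ`. -/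
def stencilOffset (n : ℕ) : Option (Fin 3 ⊕ Fin 3) → (Fin 3 → ZMod n)
  | none => 0
  | some (Sum.inl i) => Pi.single i 1
  | some (Sum.inr i) => -Pi.single i 1

/-- For `n > 2` one has `1 ≠ 0` and `1 ≠ -1` in `ZMod n`, so the offsets are pairwise distinct. -/
lemma stencilOffset_injective (n : ℕ) (hn : 2 < n) :
    Function.Injective (stencilOffset n) := by
  have : Fact (2 < n) := ⟨hn⟩
  have : Fact (1 < n) := ⟨by omega⟩
  have h1 : (1 : ZMod n) ≠ 0 := one_ne_zero
  have h2 : (1 : ZMod n) ≠ -1 := (ZMod.neg_one_ne_one).symm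
  have hs0 : ∀ i : Fin 3, (Pi.single i 1 : Fin 3 → ZMod n) ≠ 0 := fun i hi => by
    simpa using congrFun hi i
  have hss : ∀ i k : Fin 3, (Pi.single i 1 : Fin 3 → ZMod n) = Pi.single k 1 → i = k :=
    fun i k hik => by
      by_contra hne
      simpa [Pi.single_apply, hne] using congrFun hik i
  have hsn : ∀ i k : Fin 3, (Pi.single i 1 : Fin 3 → ZMod n) ≠ -Pi.single k 1 :=
    fun i k hik => by
      have := congrFun hik i
      by_cases hne : i = k
      · subst hne
        exact h2 (by simpa using this)
      · simp [hne] at this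
  rintro (_ | i | i) (_ | k | k) hik <;> simp only [stencilOffset] at hik
  · rfl
  · exact absurd hik.symm (hs0 k)
  · exact absurd (neg_eq_zero.mp hik.symm) (hs0 k)
  · exact absurd hik (hs0 i)
  · rw [hss i k hik]
  · exact absurd hik (hsn i k)
  · exact absurd (neg_eq_zero.mp hik) (hs0 i)
  · exact absurd hik.symm (hsn k i)
  · rw [hss i k (neg_injective hik)]

lemma stencil_row_sum (n : ℕ) [NeZero n] (hn : 2 < n)
    (j : Fin 3 → ZMod n) (f : (Fin 3 → ZMod n) → ℝ)
    (hf : ∀ k, k ≠ j →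
      (∀ i : Fin 3, k ≠ j + Pi.single i 1 ∧ k ≠ j - Pi.single i 1) → f k = 0) :
    ∑ k, f k = f j + (∑ i, f (j + Pi.single i 1) + ∑ i, f (j - Pi.single i 1)) := by
  have key : ∑ o, f (j + stencilOffset n o) = ∑ k, f k := by
    refine Fintype.sum_of_injective (fun o => j + stencilOffset n o)
      (fun x y hxy => stencilOffset_injective n hn (add_left_cancel hxy)) _ _ ?_ (fun _ => rfl)
    intro k hk
    refine hf k ?_ fun i => ⟨?_, ?_⟩
    · rintro rfl
      exact hk ⟨none, by simp [stencilOffset]⟩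
    · rintro rfl
      exact hk ⟨some (Sum.inl i), by simp [stencilOffset]⟩
    · rintro rfl
      exact hk ⟨some (Sum.inr i), by simp [stencilOffset, sub_eq_add_neg]⟩
  rw [← key, Fintype.sum_option, Fintype.sum_sum_type]
  simp [stencilOffset, sub_eq_add_neg]

/-- Summation by parts: the stencil form is a weighted sum of squared differences plus the
potential term. -/
lemma stencil_quadratic_form (n : ℕ) [NeZero n] (hn : 2 < n) (c : ℝ)
    (b : (Fin 3 → ZMod n) → ℝ) (α : Fin 3 → (Fin 3 → ZMod n) → ℝ)
    (A : Matrix (Fin 3 → ZMod n) (Fin 3 → ZMod n) ℝ)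
    (hdiag : ∀ j, A j j = c * (∑ i, (α i j + α i (j - Pi.single i 1))) + b j)
    (hoff : ∀ j (i : Fin 3), A j (j + Pi.single i 1) = -c * α i j ∧
      A (j + Pi.single i 1) j = -c * α i j)
    (hzero : ∀ j k, k ≠ j →
      (∀ i : Fin 3, k ≠ j + Pi.single i 1 ∧ k ≠ j - Pi.single i 1) → A j k = 0)
    (u : (Fin 3 → ZMod n) → ℝ) :
    u ⬝ᵥ A.mulVec u =
      c * (∑ i, ∑ j, α i j * (u (j + Pi.single i 1) - u j) ^ 2) + ∑ j, b j * u j ^ 2 := by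
  have hback : ∀ j (i : Fin 3), A j (j - Pi.single i 1) = -c * α i (j - Pi.single i 1) := by
    intro j i
    have := (hoff (j - Pi.single i 1) i).2
    rwa [sub_add_cancel] at this
  -- Backward contributions at `j`, kept in this form so that the shift `j ↦ j + eᵢ` applies.
  let g : Fin 3 → (Fin 3 → ZMod n) → ℝ := fun i j =>
    α i (j - Pi.single i 1) * (u j ^ 2 - u j * u (j - Pi.single i 1))
  have hrow : ∀ j, u j * A.mulVec u j =
      (c * ∑ i, (α i j * (u j ^ 2 - u j * u (j + Pi.single i 1)) + g i j)) + b j * u j ^ 2 := by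
    intro j
    have := stencil_row_sum n hn j (fun k => A j k * u k)
      (fun k h1 h2 => by simp [hzero j k h1 h2])
    rw [Matrix.mulVec, dotProduct, this]
    simp only [hdiag, (hoff _ _).1, hback, g, Fin.sum_univ_three]
    ring
  have hshift : ∀ i, ∑ j, g i j =
      ∑ j, α i j * (u (j + Pi.single i 1) ^ 2 - u (j + Pi.single i 1) * u j) := by
    intro i
    rw [← Equiv.sum_comp (Equiv.addRight (Pi.single i 1 : Fin 3 → ZMod n)) (g i)]
    simp [g]
  rw [dotProduct, Finset.sum_congr rfl fun j _ => hrow j, Finset.sum_add_distrib,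
    ← Finset.mul_sum, Finset.sum_comm]
  congr 2
  refine Finset.sum_congr rfl fun i _ => ?_
  rw [Finset.sum_add_distrib, hshift, ← Finset.sum_add_distrib]
  exact Finset.sum_congr rfl fun j _ => by ring

lemma const_of_shift_invariant (n : ℕ) [NeZero n] (u : (Fin 3 → ZMod n) → ℝ)
    (hu : ∀ (i : Fin 3) j, u (j + Pi.single i 1) = u j) : ∀ j k, u j = u k := by
  -- The periods of `u` form a submonoid containing the generators `eᵢ`.
  let P : AddSubmonoid (Fin 3 → ZMod n) :=
    { carrier := {v | ∀ j, u (j + v) = u j}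
      zero_mem' := fun j => by simp
      add_mem' := fun {v w} hv hw j => by rw [← add_assoc, hw, hv] }
  have hP : ∀ v, v ∈ P := by
    intro v
    rw [← Finset.univ_sum_single v]
    refine P.sum_mem fun i _ => ?_
    have : (Pi.single i (v i) : Fin 3 → ZMod n) = (v i).val • Pi.single i 1 := by
      rw [← Pi.single_smul]
      simp
    rw [this]
    exact P.nsmul_mem (fun j => hu i j) _
  intro j k
  simpa using (hP (j - k) k)

/-- **Positive semidefiniteness and kernel of the periodic seven-point stencil matrix.**
On the periodic grid `(ZMod n)³` (with `n > 2`, grid spacing `h = 1/n`, unit shifts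
`e i = Pi.single i 1`), if `αᵢ(j) > 0` and `b(j) ≥ 0` for all `i, j`, then the seven-point
stencil matrix `A` of `u ↦ -∇·(a∇u) + b u` is symmetric positive semidefinite, and
`uᵀ A u = 0` holds if and only if `u` is constant on the grid and `b(j)·u(j)² = 0` for
all `j`. -/
theorem seven_point_stencil_posSemidef (n : ℕ) [NeZero n] (hn : 2 < n)
    (h : ℝ) (hh : h = 1 / n)
    (b : (Fin 3 → ZMod n) → ℝ) (α : Fin 3 → (Fin 3 → ZMod n) → ℝ)
    (hα : ∀ (i : Fin 3) j, 0 < α i j) (hb : ∀ j, 0 ≤ b j)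
    (A : Matrix (Fin 3 → ZMod n) (Fin 3 → ZMod n) ℝ)
    (hdiag : ∀ j, A j j = 1 / h ^ 2 * (∑ i, (α i j + α i (j - Pi.single i 1))) + b j)
    (hoff : ∀ j (i : Fin 3), A j (j + Pi.single i 1) = -(1 / h ^ 2) * α i j ∧
      A (j + Pi.single i 1) j = -(1 / h ^ 2) * α i j)
    (hzero : ∀ j k, k ≠ j →
      (∀ i : Fin 3, k ≠ j + Pi.single i 1 ∧ k ≠ j - Pi.single i 1) → A j k = 0) :
    A.PosSemidef ∧
      ∀ u : (Fin 3 → ZMod n) → ℝ,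
        u ⬝ᵥ A.mulVec u = 0 ↔ ((∀ j k, u j = u k) ∧ ∀ j, b j * u j ^ 2 = 0) := by
  have hn0 : (0 : ℝ) < n := by exact_mod_cast (by omega : 0 < n)
  have hc : 0 < 1 / h ^ 2 := by
    rw [hh]
    positivity
  have hQ := stencil_quadratic_form n hn (1 / h ^ 2) b α A hdiag hoff hzero
  have hterm : ∀ (u : (Fin 3 → ZMod n) → ℝ) (i : Fin 3) j,
      0 ≤ α i j * (u (j + Pi.single i 1) - u j) ^ 2 :=
    fun u i j => mul_nonneg (hα i j).le (sq_nonneg _)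
  have hinner : ∀ (u : (Fin 3 → ZMod n) → ℝ) (i : Fin 3),
      0 ≤ ∑ j, α i j * (u (j + Pi.single i 1) - u j) ^ 2 :=
    fun u i => Finset.sum_nonneg fun j _ => hterm u i j
  have hD : ∀ u : (Fin 3 → ZMod n) → ℝ,
      0 ≤ ∑ i, ∑ j, α i j * (u (j + Pi.single i 1) - u j) ^ 2 :=
    fun u => Finset.sum_nonneg fun i _ => hinner u i
  have hBterm : ∀ (u : (Fin 3 → ZMod n) → ℝ) j, 0 ≤ b j * u j ^ 2 :=
    fun u j => mul_nonneg (hb j) (sq_nonneg _)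
  have hB : ∀ u : (Fin 3 → ZMod n) → ℝ, 0 ≤ ∑ j, b j * u j ^ 2 :=
    fun u => Finset.sum_nonneg fun j _ => hBterm u j
  have hsymm : ∀ j k, A k j = A j k := by
    intro j k
    by_cases hjk : k = j
    · rw [hjk]
    by_cases hnb : ∀ i : Fin 3, k ≠ j + Pi.single i 1 ∧ k ≠ j - Pi.single i 1
    · rw [hzero j k hjk hnb, hzero k j (Ne.symm hjk)]
      exact fun i => ⟨fun e => (hnb i).2 (by rw [e]; simp), fun e => (hnb i).1 (by rw [e]; simp)⟩
    · push Not at hnb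
      obtain ⟨i, hi⟩ := hnb
      by_cases hk : k = j + Pi.single i 1
      · rw [hk, (hoff j i).1, (hoff j i).2]
      · have e : j = k + Pi.single i 1 := by rw [hi hk]; simp
        rw [e, (hoff k i).1, (hoff k i).2]
  refine ⟨Matrix.PosSemidef.of_dotProduct_mulVec_nonneg ?_ ?_, ?_⟩
  · ext j k
    simp [hsymm j k]
  · intro u
    rw [star_trivial, hQ u]
    exact add_nonneg (mul_nonneg hc.le (hD u)) (hB u)
  · intro u
    rw [hQ u]
    constructor
    · intro h0
      obtain ⟨h1, h2⟩ :=
        (add_eq_zero_iff_of_nonneg (mul_nonneg hc.le (hD u)) (hB u)).mp h0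
      have h1' := (mul_eq_zero.mp h1).resolve_left hc.ne'
      refine ⟨const_of_shift_invariant n u fun i j => ?_, fun j =>
        (Finset.sum_eq_zero_iff_of_nonneg fun j _ => hBterm u j).mp h2 j (Finset.mem_univ j)⟩
      have h3 := (Finset.sum_eq_zero_iff_of_nonneg fun i _ => hinner u i).mp h1' i
        (Finset.mem_univ i)
      have h4 := (Finset.sum_eq_zero_iff_of_nonneg fun j _ => hterm u i j).mp h3 j
        (Finset.mem_univ j)
      exact sub_eq_zero.mp (pow_eq_zero_iff two_ne_zero |>.mp
        ((mul_eq_zero.mp h4).resolve_left (hα i j).ne'))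
    · rintro ⟨hconst, hbu⟩
      have hd : ∀ (i : Fin 3) j, u (j + Pi.single i 1) - u j = 0 :=
        fun i j => sub_eq_zero.mpr (hconst _ _)
      simp [hd, hbu]
end
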